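/- Let 0 → L → M → N → 0 be exact with M and N Gorenstein weak injective. Then the following are equivalent: (1) L is Gorenstein weak injective; (2) Ext^1_R(I, L) = 0 for every injective module I; (3) Ext^1_R(W, L) = 0 for every weak injective module W. -/

import Mathlib

open CategoryTheory

universe u

noncomputable section

variable (R : Type u) [Ring R]

/-- Vanishing of `Ext^n_R(N, M)` for left `R`-modules, expressed via the `Ext` bifunctor
on the `ℤ`-linear abelian category `ModuleCat R`. -/
def ExtVanish (n : ℕ) (N M : ModuleCat.{u} R) : Prop :=
  Subsingleton (((_root_.Ext ℤ (ModuleCat.{u} R) n).obj (Opposite.op N)).obj M)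

/-- An `R`-module is super finitely presented if it admits a resolution by
finitely generated projective modules. -/
def SuperFinitelyPresented (N : ModuleCat.{u} R) : Prop :=
  ∃ (F : ℕ → ModuleCat.{u} R) (d : ∀ n, F (n + 1) →ₗ[R] F n) (ε : F 0 →ₗ[R] N),
    (∀ n, Module.Finite R (F n)) ∧ (∀ n, Module.Projective R (F n)) ∧
    Function.Surjective ε ∧ Function.Exact (d 0) ε ∧
    (∀ n, Function.Exact (d (n + 1)) (d n))

/-- An `R`-module `W` is weak injective if `Ext^1_R(N, W) = 0` for every super finitely
presented module `N`. -/
def WeakInjective (W : ModuleCat.{u} R) : Prop :=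
  ∀ N : ModuleCat.{u} R, SuperFinitelyPresented R N → ExtVanish R 1 N W

/-- `wid_R M ≤ n` : `Ext^{n+1}_R(N, M) = 0` for every super finitely presented `N`. -/
def WidLE (M : ModuleCat.{u} R) (n : ℕ) : Prop :=
  ∀ N : ModuleCat.{u} R, SuperFinitelyPresented R N → ExtVanish R (n + 1) N M

/-- The weak injective dimension, as an element of `ℕ∞`. -/
def Wid (M : ModuleCat.{u} R) : ℕ∞ :=
  sInf {c : ℕ∞ | ∃ n : ℕ, c = n ∧ WidLE R M n}

/-- A doubly infinite exact complex of injective modules which stays exact after applying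
`Hom_R(W, -)` for every module `W` in the test class `𝒯`. -/
def IsTotallyAcyclicInjComplex (𝒯 : ModuleCat.{u} R → Prop)
    (I : ℤ → ModuleCat.{u} R) (d : ∀ n : ℤ, I n →ₗ[R] I (n + 1)) : Prop :=
  (∀ n, Module.Injective R (I n)) ∧
  (∀ n, Function.Exact (d n) (d (n + 1))) ∧
  (∀ W : ModuleCat.{u} R, 𝒯 W → ∀ n,
    Function.Exact (fun g : W →ₗ[R] I n => (d n).comp g)
      (fun g : W →ₗ[R] I (n + 1) => (d (n + 1)).comp g))

/-- `M` is Gorenstein injective relative to the test class `𝒯` : `M` is the cokernel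
`Coker (I_1 → I_0)` of a `Hom(𝒯, -)`-exact exact complex of injective modules. -/
def GorensteinRelInjective (𝒯 : ModuleCat.{u} R → Prop) (M : ModuleCat.{u} R) : Prop :=
  ∃ (I : ℤ → ModuleCat.{u} R) (d : ∀ n : ℤ, I n →ₗ[R] I (n + 1)) (π : I 0 →ₗ[R] M),
    IsTotallyAcyclicInjComplex R 𝒯 I d ∧
    Function.Surjective π ∧ Function.Exact (d (-1)) π

/-- Gorenstein weak injective modules: the test class is that of weak injective modules. -/
def GorensteinWeakInjective (M : ModuleCat.{u} R) : Prop :=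
  GorensteinRelInjective R (WeakInjective R) M

/-- Gorenstein injective modules: the test class is that of injective modules. -/
def GorensteinInjective (M : ModuleCat.{u} R) : Prop :=
  GorensteinRelInjective R (fun E => Module.Injective R E) M

/-- The data of an exact sequence `0 → M → G^0 → ⋯ → G^n → 0` (the modules `G^i` for
`i > n` being trivial). -/
def IsFiniteCoresolution (M : ModuleCat.{u} R) (n : ℕ) (G : ℕ → ModuleCat.{u} R)
    (d : ∀ i, G i →ₗ[R] G (i + 1)) (ε : M →ₗ[R] G 0) : Prop :=
  Function.Injective ε ∧ Function.Exact ε (d 0) ∧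
  (∀ i, Function.Exact (d i) (d (i + 1))) ∧
  (∀ i, n < i → ∀ x : G i, x = 0)

/-- `Gwid_R M ≤ n` : `M` has a coresolution of length `n` by Gorenstein weak injective
modules. -/
def GwidLE (M : ModuleCat.{u} R) (n : ℕ) : Prop :=
  ∃ (G : ℕ → ModuleCat.{u} R) (d : ∀ i, G i →ₗ[R] G (i + 1)) (ε : M →ₗ[R] G 0),
    IsFiniteCoresolution R M n G d ε ∧ ∀ i, GorensteinWeakInjective R (G i)

/-- The Gorenstein weak injective dimension, as an element of `ℕ∞`. -/
def Gwid (M : ModuleCat.{u} R) : ℕ∞ :=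
  sInf {c : ℕ∞ | ∃ n : ℕ, c = n ∧ GwidLE R M n}

/-- `Gid_R M ≤ n`, via coresolutions by Gorenstein injective modules. -/
def GidLE (M : ModuleCat.{u} R) (n : ℕ) : Prop :=
  ∃ (G : ℕ → ModuleCat.{u} R) (d : ∀ i, G i →ₗ[R] G (i + 1)) (ε : M →ₗ[R] G 0),
    IsFiniteCoresolution R M n G d ε ∧ ∀ i, GorensteinInjective R (G i)

/-- The Gorenstein injective dimension, as an element of `ℕ∞`. -/
def Gid (M : ModuleCat.{u} R) : ℕ∞ :=
  sInf {c : ℕ∞ | ∃ n : ℕ, c = n ∧ GidLE R M n}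

/-- `id_R M ≤ n`, via coresolutions by injective modules. -/
def IdLE (M : ModuleCat.{u} R) (n : ℕ) : Prop :=
  ∃ (G : ℕ → ModuleCat.{u} R) (d : ∀ i, G i →ₗ[R] G (i + 1)) (ε : M →ₗ[R] G 0),
    IsFiniteCoresolution R M n G d ε ∧ ∀ i, Module.Injective R (G i)

/-- The injective dimension, as an element of `ℕ∞`. -/
def Idim (M : ModuleCat.{u} R) : ℕ∞ :=
  sInf {c : ℕ∞ | ∃ n : ℕ, c = n ∧ IdLE R M n}

/-- The data of an exact sequence `0 → P_n → ⋯ → P_0 → M → 0`. -/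
def IsFiniteResolution (M : ModuleCat.{u} R) (n : ℕ) (P : ℕ → ModuleCat.{u} R)
    (d : ∀ i, P (i + 1) →ₗ[R] P i) (ε : P 0 →ₗ[R] M) : Prop :=
  Function.Surjective ε ∧ Function.Exact (d 0) ε ∧
  (∀ i, Function.Exact (d (i + 1)) (d i)) ∧
  (∀ i, n < i → ∀ x : P i, x = 0)

/-- `pd_R M ≤ n`, via resolutions by projective modules. -/
def PdLE (M : ModuleCat.{u} R) (n : ℕ) : Prop :=
  ∃ (P : ℕ → ModuleCat.{u} R) (d : ∀ i, P (i + 1) →ₗ[R] P i) (ε : P 0 →ₗ[R] M),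
    IsFiniteResolution R M n P d ε ∧ ∀ i, Module.Projective R (P i)

end

variable (R : Type u) [Ring R]

/-- A short exact sequence `0 → L → M → N → 0` of `R`-modules. -/
def ShortExactSeq (L M N : ModuleCat.{u} R) (f : L →ₗ[R] M) (g : M →ₗ[R] N) : Prop :=
  Function.Injective f ∧ Function.Surjective g ∧ Function.Exact f g

/-- Exactness of `0 → Hom(C, X) → Hom(B, X) → Hom(A, X) → 0` induced by
`0 → A → B → C → 0`. -/
def HomContraExact (X : ModuleCat.{u} R) {A B C : ModuleCat.{u} R}
    (f : A →ₗ[R] B) (g : B →ₗ[R] C) : Prop :=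
  Function.Injective (fun h : C →ₗ[R] X => h.comp g) ∧
  Function.Exact (fun h : C →ₗ[R] X => h.comp g) (fun h : B →ₗ[R] X => h.comp f) ∧
  Function.Surjective (fun h : B →ₗ[R] X => h.comp f)

/-- A short exact sequence is `GWI`-copure exact if `Hom_R(-, X)` leaves it exact for
every Gorenstein weak injective module `X`. -/
def GWICopureExact {A B C : ModuleCat.{u} R} (f : A →ₗ[R] B) (g : B →ₗ[R] C) : Prop :=
  ShortExactSeq R A B C f g ∧
  ∀ X : ModuleCat.{u} R, GorensteinWeakInjective R X → HomContraExact R X f g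

/-- `M` is `GWI`-copure injective if `Hom_R(-, M)` is exact on every `GWI`-copure exact
sequence. -/
def GWICopureInjectiveMod (M : ModuleCat.{u} R) : Prop :=
  ∀ (A B C : ModuleCat.{u} R) (f : A →ₗ[R] B) (g : B →ₗ[R] C),
    GWICopureExact R f g → HomContraExact R M f g

/-- `φ : M → G` is a Gorenstein weak injective preenvelope of `M`. -/
def GWIPreenvelope (M G : ModuleCat.{u} R) (φ : M →ₗ[R] G) : Prop :=
  GorensteinWeakInjective R G ∧
  ∀ G' : ModuleCat.{u} R, GorensteinWeakInjective R G' →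
    ∀ f : M →ₗ[R] G', ∃ g : G →ₗ[R] G', g.comp φ = f

/-- A `WI`-pure Tate injective resolution of `M` : an injective resolution
`0 → M → E^0 → E^1 → ⋯`, a `WI`-pure exact complex `T` of injectives, and a chain map
`u : E → T` which is an isomorphism in all sufficiently large degrees. -/
def WIPureTateInjectiveResolution (M : ModuleCat.{u} R)
    (E : ℕ → ModuleCat.{u} R) (dE : ∀ n, E n →ₗ[R] E (n + 1)) (ε : M →ₗ[R] E 0)
    (T : ℤ → ModuleCat.{u} R) (dT : ∀ n : ℤ, T n →ₗ[R] T (n + 1))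
    (u : ∀ n : ℕ, E n →ₗ[R] T n) : Prop :=
  (∀ n, Module.Injective R (E n)) ∧ Function.Injective ε ∧
  Function.Exact ε (dE 0) ∧ (∀ n, Function.Exact (dE n) (dE (n + 1))) ∧
  IsTotallyAcyclicInjComplex R (WeakInjective R) T dT ∧
  (∀ n : ℕ, (dT n).comp (u n) = (u (n + 1)).comp (dE n)) ∧
  ∃ N : ℕ, ∀ n, N ≤ n → Function.Bijective (u n)

/-- Vanishing of the relative Tate cohomology `Êxt^i_GWI(N, M)` for all `i ∈ ℤ`,
computed from the `WI`-pure exact complex `T` : the complex `Hom_R(N, T)` is exact. -/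
def ExtHatVanishesAll (N : ModuleCat.{u} R) (T : ℤ → ModuleCat.{u} R)
    (dT : ∀ n : ℤ, T n →ₗ[R] T (n + 1)) : Prop :=
  ∀ n : ℤ, Function.Exact (fun g : N →ₗ[R] T n => (dT n).comp g)
    (fun g : N →ₗ[R] T (n + 1) => (dT (n + 1)).comp g)

section

variable {R}

theorem LinearMap.exists_factor_of_surjective {A B C : Type*} [AddCommGroup A] [AddCommGroup B]
    [AddCommGroup C] [Module R A] [Module R B] [Module R C] (p : A →ₗ[R] B)
    (hp : Function.Surjective p) (h : A →ₗ[R] C) (hk : ∀ x, p x = 0 → h x = 0) :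
    ∃ k : B →ₗ[R] C, ∀ x, k (p x) = h x :=
  ⟨(p.ker.liftQ h fun x hx => hk x hx) ∘ₗ (p.quotKerEquivOfSurjective hp).symm.toLinearMap,
    fun x => by
      have hx : (p.quotKerEquivOfSurjective hp).symm (p x) = p.ker.mkQ x := by
        rw [LinearEquiv.symm_apply_eq]; rfl
      simpa [hx] using Submodule.liftQ_apply _ _ _⟩

theorem LinearMap.exists_factor_of_injective {A B C : Type*} [AddCommGroup A] [AddCommGroup B]
    [AddCommGroup C] [Module R A] [Module R B] [Module R C] (i : B →ₗ[R] C)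
    (hi : Function.Injective i) (h : A →ₗ[R] C) (hr : ∀ x, ∃ y, i y = h x) :
    ∃ k : A →ₗ[R] B, ∀ x, i (k x) = h x :=
  ⟨(LinearEquiv.ofInjective i hi).symm.toLinearMap ∘ₗ h.codRestrict i.range hr, fun x =>
    congrArg Subtype.val ((LinearEquiv.ofInjective i hi).apply_symm_apply ⟨h x, hr x⟩)⟩

theorem extVanish_one_iff {W : ModuleCat.{u} R} (L : ModuleCat.{u} R)
    (P : ProjectiveResolution W) :
    ExtVanish R 1 W L ↔ ∀ z : P.complex.X 1 →ₗ[R] L,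
      (∀ x, z ((P.complex.d 2 1).hom x) = 0) →
      ∃ t : P.complex.X 0 →ₗ[R] L, ∀ x, t ((P.complex.d 1 0).hom x) = z x := by
  have h1 : ExtVanish R 1 W L ↔ (P.complex.linearYonedaObj ℤ L).ExactAt 1 := by
    rw [HomologicalComplex.exactAt_iff_isZero_homology, ← (P.isoExt (R := ℤ) 1 L).isZero_iff]
    exact (ModuleCat.isZero_iff_subsingleton).symm
  rw [h1, HomologicalComplex.exactAt_iff' _ 0 1 2 (by simp) (by simp),
    ShortComplex.moduleCat_exact_iff]
  constructor
  · intro h z hz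
    obtain ⟨t, ht⟩ := h (ModuleCat.ofHom z) (by
      change P.complex.d 2 1 ≫ ModuleCat.ofHom z = 0
      ext x
      exact hz x)
    have ht' : P.complex.d 1 0 ≫ t = ModuleCat.ofHom z := ht
    exact ⟨t.hom, fun x => congr($(ht').hom x)⟩
  · intro h z hz
    have hz' : P.complex.d 2 1 ≫ (z : P.complex.X 1 ⟶ L) = 0 := hz
    obtain ⟨t, ht⟩ := h (ModuleCat.Hom.hom (z : P.complex.X 1 ⟶ L))
      fun x => congr($(hz').hom x)
    refine ⟨(ModuleCat.ofHom t : P.complex.X 0 ⟶ L), ?_⟩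
    change P.complex.d 1 0 ≫ ModuleCat.ofHom t = z
    ext x
    exact ht x

theorem exists_projective_presentation {W : ModuleCat.{u} R} (P : ProjectiveResolution W) :
    Module.Projective R (P.complex.X 0) ∧ ∃ ε : P.complex.X 0 →ₗ[R] W, Function.Surjective ε ∧
      Function.Exact (P.complex.d 1 0).hom ε ∧
      Function.Exact (P.complex.d 2 1).hom (P.complex.d 1 0).hom := by
  refine ⟨(IsProjective.iff_projective _).2 (P.projective 0), (P.π.f 0).hom,
    (ModuleCat.epi_iff_surjective (P.π.f 0)).1 inferInstance, ?_, ?_⟩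
  · exact (ShortComplex.ShortExact.moduleCat_exact_iff_function_exact _).1 P.exact₀
  · exact (ShortComplex.ShortExact.moduleCat_exact_iff_function_exact _).1 (P.exact_succ 0)

theorem ExtVanish.exists_lift {W L B C : ModuleCat.{u} R} (hW : ExtVanish R 1 W L)
    {f : L →ₗ[R] B} {g : B →ₗ[R] C} (hs : ShortExactSeq R L B C f g) (h : W →ₗ[R] C) :
    ∃ k : W →ₗ[R] B, ∀ x, g (k x) = h x := by
  obtain ⟨hf, hg, hfg⟩ := hs
  let P := projectiveResolution W
  obtain ⟨hP, ε, hε, hd, hd'⟩ := exists_projective_presentation P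
  rw [extVanish_one_iff L P] at hW
  obtain ⟨y, hy⟩ := Module.projective_lifting_property g (h ∘ₗ ε) hg
  have hy' : ∀ x, g (y x) = h (ε x) := fun x => congr($hy x)
  obtain ⟨z, hz⟩ := LinearMap.exists_factor_of_injective f hf (y ∘ₗ (P.complex.d 1 0).hom)
    fun x => (hfg _).1 (by simp [hy', hd.apply_apply_eq_zero])
  obtain ⟨t, ht⟩ := hW z fun x => hf (by simp [hz, hd'.apply_apply_eq_zero])
  obtain ⟨k, hk⟩ := LinearMap.exists_factor_of_surjective ε hε (y - f ∘ₗ t) fun x hx => by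
    obtain ⟨x, rfl⟩ := (hd _).1 hx
    simp [ht, hz]
  refine ⟨k, fun x => ?_⟩
  obtain ⟨x, rfl⟩ := hε x
  simp [hk, hy', hfg.apply_apply_eq_zero]

theorem extVanish_one_of_exists_lift {W L E C : ModuleCat.{u} R} (hE : Module.Injective R E)
    {f : L →ₗ[R] E} {g : E →ₗ[R] C} (hs : ShortExactSeq R L E C f g)
    (hl : ∀ h : W →ₗ[R] C, ∃ k : W →ₗ[R] E, ∀ x, g (k x) = h x) : ExtVanish R 1 W L := by
  obtain ⟨hf, hg, hfg⟩ := hs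
  let P := projectiveResolution W
  obtain ⟨-, ε, hε, hd, hd'⟩ := exists_projective_presentation P
  rw [extVanish_one_iff L P]
  intro z hz
  obtain ⟨w, hw⟩ := LinearMap.exists_factor_of_surjective (P.complex.d 1 0).hom.rangeRestrict
    (LinearMap.surjective_rangeRestrict _) (f ∘ₗ z) fun x hx => by
      obtain ⟨x, rfl⟩ := (hd' _).1 (congrArg Subtype.val hx)
      simp [hz]
  obtain ⟨y, hy⟩ := hE.out _ (Submodule.injective_subtype _) w
  have hy' : ∀ x, y ((P.complex.d 1 0).hom x) = f (z x) := fun x => (hy _).trans (hw x)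
  obtain ⟨h, hh⟩ := LinearMap.exists_factor_of_surjective ε hε (g ∘ₗ y) fun x hx => by
    obtain ⟨x, rfl⟩ := (hd _).1 hx
    simp [hy', hfg.apply_apply_eq_zero]
  obtain ⟨k, hk⟩ := hl h
  obtain ⟨t, ht⟩ := LinearMap.exists_factor_of_injective f hf (y - k ∘ₗ ε) fun x =>
    (hfg _).1 (by simp [hk, hh])
  exact ⟨t, fun x => hf (by simp [ht, hy', hd.apply_apply_eq_zero])⟩

theorem Module.Injective.weakInjective {E : ModuleCat.{u} R} (hE : Module.Injective R E) :
    WeakInjective R E := fun _ _ =>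
  extVanish_one_of_exists_lift (C := ModuleCat.of R PUnit) (f := LinearMap.id) (g := 0) hE
    ⟨fun _ _ h => h, fun _ => ⟨0, Subsingleton.elim _ _⟩,
      fun x => ⟨fun _ => ⟨x, rfl⟩, fun _ => rfl⟩⟩ fun _ => ⟨0, fun _ => Subsingleton.elim _ _⟩

/-- A short exact sequence `0 → A → I → B → 0` with `I` injective, along which every map
from a weak injective module to `B` lifts to `I`. -/
def IsProperInjectiveSeq (A I B : ModuleCat.{u} R) (i : A →ₗ[R] I) (p : I →ₗ[R] B) : Prop :=
  Module.Injective R I ∧ ShortExactSeq R A I B i p ∧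
  ∀ W : ModuleCat.{u} R, WeakInjective R W → ∀ h : W →ₗ[R] B,
    ∃ k : W →ₗ[R] I, ∀ x, p (k x) = h x

theorem GorensteinWeakInjective.of_forall_exists (Q : ModuleCat.{u} R → Prop)
    (hl : ∀ M, Q M → ∃ A I i p, Q A ∧ IsProperInjectiveSeq A I M i p)
    (hr : ∀ M, Q M → ∃ I B i p, Q B ∧ IsProperInjectiveSeq M I B i p)
    {M : ModuleCat.{u} R} (hM : Q M) : GorensteinWeakInjective R M := by
  have hl' : ∀ M : Subtype Q, ∃ A : Subtype Q, ∃ I i p, IsProperInjectiveSeq A.1 I M.1 i p := by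
    rintro ⟨M, hM⟩
    obtain ⟨A, I, i, p, hA, h⟩ := hl M hM
    exact ⟨⟨A, hA⟩, I, i, p, h⟩
  have hr' : ∀ M : Subtype Q, ∃ B : Subtype Q, ∃ I i p, IsProperInjectiveSeq M.1 I B.1 i p := by
    rintro ⟨M, hM⟩
    obtain ⟨I, B, i, p, hB, h⟩ := hr M hM
    exact ⟨⟨B, hB⟩, I, i, p, h⟩
  choose left hleft using hl'
  choose right hright using hr'
  let Z : ℤ → Subtype Q := fun n => match n with
    | .ofNat 0 => left ⟨M, hM⟩
    | .ofNat (k + 1) => Nat.rec ⟨M, hM⟩ (fun _ => right) k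
    | .negSucc k => Nat.rec (left (left ⟨M, hM⟩)) (fun _ => left) k
  have hZ : ∀ n, ∃ I i p, IsProperInjectiveSeq (Z n).1 I (Z (n + 1)).1 i p := by
    rintro ((_ | k) | (_ | k))
    · exact hleft ⟨M, hM⟩
    · exact hright (Z (.ofNat (k + 1)))
    · exact hleft (left ⟨M, hM⟩)
    · exact hleft (Z (.negSucc k))
  choose I i p hI hs hlift using hZ
  refine ⟨I, fun n => i (n + 1) ∘ₗ p n, p 0, ⟨hI, fun n x => ?_, fun W hW n x => ?_⟩,
    (hs 0).2.1, fun x => ?_⟩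
  · obtain ⟨hi, -, -⟩ := hs (n + 1 + 1)
    obtain ⟨-, -, he⟩ := hs (n + 1)
    obtain ⟨-, hp, -⟩ := hs n
    simp only [LinearMap.comp_apply, map_eq_zero_iff _ hi, he x, Set.mem_range]
    exact ⟨fun ⟨y, hy⟩ => (hp y).imp fun z hz => by rw [hz, hy], fun ⟨y, hy⟩ => ⟨_, hy⟩⟩
  · obtain ⟨hi, -, -⟩ := hs (n + 1 + 1)
    obtain ⟨hi', -, he⟩ := hs (n + 1)
    constructor
    · intro hx
      have hx' : ∀ w, p (n + 1) (x w) = 0 := fun w =>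
        hi (by simpa using congr($hx w))
      obtain ⟨y, hy⟩ := LinearMap.exists_factor_of_injective (i (n + 1)) hi' x
        fun w => (he _).1 (hx' w)
      obtain ⟨k, hk⟩ := hlift n W hW y
      exact ⟨k, LinearMap.ext fun w => by simp [hk, hy]⟩
    · rintro ⟨k, rfl⟩
      exact LinearMap.ext fun w => by simp [he.apply_apply_eq_zero]
  · obtain ⟨-, -, he⟩ := hs 0
    obtain ⟨-, hp, -⟩ := hs (-1)
    rw [he x]
    exact ⟨fun ⟨y, hy⟩ => (hp y).imp fun z hz => (congrArg (i 0) hz).trans hy,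
      fun ⟨y, hy⟩ => ⟨_, hy⟩⟩

theorem IsTotallyAcyclicInjComplex.exists_isProperInjectiveSeq {I : ℤ → ModuleCat.{u} R}
    {d : ∀ n : ℤ, I n →ₗ[R] I (n + 1)}
    (h : IsTotallyAcyclicInjComplex R (WeakInjective R) I d) (n : ℤ) {A B : ModuleCat.{u} R}
    {i : A →ₗ[R] I n} (hi : Function.Injective i) (hid : Function.Exact i (d n))
    {j : B →ₗ[R] I (n + 1)} (hj : Function.Injective j) (hjd : Function.Exact j (d (n + 1))) :
    ∃ p, IsProperInjectiveSeq A (I n) B i p := by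
  obtain ⟨hI, hd, hW⟩ := h
  obtain ⟨p, hp⟩ := LinearMap.exists_factor_of_injective j hj (d n) fun x =>
    (hjd _).1 ((hd n).apply_apply_eq_zero x)
  refine ⟨p, hI n, ⟨hi, fun b => ?_, fun x => ?_⟩, fun W hW' f => ?_⟩
  · obtain ⟨x, hx⟩ := (hd n _).1 (hjd.apply_apply_eq_zero b)
    exact ⟨x, hj (by rw [hp, hx])⟩
  · rw [← map_eq_zero_iff j hj, hp, hid x]
  · obtain ⟨k, hk⟩ := (hW W hW' n (j ∘ₗ f)).1
      (LinearMap.ext fun w => hjd.apply_apply_eq_zero (f w))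
    exact ⟨k, fun w => hj (by rw [hp]; exact congr($hk w))⟩

theorem GorensteinWeakInjective.exists_seq {M : ModuleCat.{u} R}
    (hM : GorensteinWeakInjective R M) :
    (∃ A I i p, GorensteinWeakInjective R A ∧ IsProperInjectiveSeq A I M i p) ∧
    ∃ I B i p, GorensteinWeakInjective R B ∧ IsProperInjectiveSeq M I B i p := by
  let Q : ModuleCat.{u} R → Prop := fun M =>
    ∃ (I : ℤ → ModuleCat.{u} R) (d : ∀ n : ℤ, I n →ₗ[R] I (n + 1)),
      IsTotallyAcyclicInjComplex R (WeakInjective R) I d ∧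
      ∃ (n : ℤ) (ι : M →ₗ[R] I n), Function.Injective ι ∧ Function.Exact ι (d n)
  have hl : ∀ M, Q M → ∃ A I i p, Q A ∧ IsProperInjectiveSeq A I M i p := by
    rintro M ⟨I, d, h, n, ι, hι, hιd⟩
    obtain ⟨n, rfl⟩ : ∃ m, n = m + 1 := ⟨n - 1, by ring⟩
    have hk := LinearMap.exact_subtype_ker_map (d n)
    obtain ⟨p, hp⟩ := h.exists_isProperInjectiveSeq n (A := ModuleCat.of R (d n).ker)
      (Submodule.injective_subtype _) hk hι hιd
    exact ⟨_, I n, _, p, ⟨I, d, h, n, _, Submodule.injective_subtype _, hk⟩, hp⟩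
  have hr : ∀ M, Q M → ∃ I B i p, Q B ∧ IsProperInjectiveSeq M I B i p := by
    rintro M ⟨I, d, h, n, ι, hι, hιd⟩
    have hk := LinearMap.exact_subtype_ker_map (d (n + 1))
    obtain ⟨p, hp⟩ := h.exists_isProperInjectiveSeq n (B := ModuleCat.of R (d (n + 1)).ker)
      hι hιd (Submodule.injective_subtype _) hk
    exact ⟨I n, _, ι, p, ⟨I, d, h, n + 1, _, Submodule.injective_subtype _, hk⟩, hp⟩
  have hQ : ∀ {M}, Q M → GorensteinWeakInjective R M := fun h =>
    GorensteinWeakInjective.of_forall_exists Q hl hr h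
  have hQM : Q M := by
    obtain ⟨I, d, π, h, hπ, hπd⟩ := hM
    obtain ⟨ι, hι⟩ := LinearMap.exists_factor_of_surjective π hπ (d 0) fun x hx => by
      obtain ⟨y, rfl⟩ := (hπd x).1 hx
      exact (h.2.1 (-1)).apply_apply_eq_zero y
    refine ⟨I, d, h, 0 + 1, ι, (injective_iff_map_eq_zero _).2 fun m hm => ?_, fun y => ?_⟩
    · obtain ⟨x, rfl⟩ := hπ m
      rw [hι] at hm
      exact (hπd x).2 ((h.2.1 (-1) (show I (-1 + 1) from x)).1 hm)
    · rw [h.2.1 0 y]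
      exact ⟨fun ⟨x, hx⟩ => ⟨π x, (hι x).trans hx⟩,
        fun ⟨m, hm⟩ => (hπ m).imp fun x hx => by rw [← hι, hx, hm]⟩
  obtain ⟨A, I, i, p, hA, h⟩ := hl M hQM
  obtain ⟨J, B, j, q, hB, h'⟩ := hr M hQM
  exact ⟨⟨A, I, i, p, hQ hA, h⟩, J, B, j, q, hQ hB, h'⟩

theorem GorensteinWeakInjective.of_seq {A I M J B : ModuleCat.{u} R} {i : A →ₗ[R] I}
    {p : I →ₗ[R] M} {j : M →ₗ[R] J} {q : J →ₗ[R] B} (hA : GorensteinWeakInjective R A)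
    (hl : IsProperInjectiveSeq A I M i p) (hB : GorensteinWeakInjective R B)
    (hr : IsProperInjectiveSeq M J B j q) : GorensteinWeakInjective R M := by
  refine GorensteinWeakInjective.of_forall_exists
    (fun M => (∃ A I i p, GorensteinWeakInjective R A ∧ IsProperInjectiveSeq A I M i p) ∧
      ∃ I B i p, GorensteinWeakInjective R B ∧ IsProperInjectiveSeq M I B i p) ?_ ?_
    ⟨⟨A, I, i, p, hA, hl⟩, J, B, j, q, hB, hr⟩
  · rintro M ⟨⟨A, I, i, p, hA, h⟩, -⟩
    exact ⟨A, I, i, p, hA.exists_seq, h⟩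
  · rintro M ⟨-, I, B, i, p, hB, h⟩
    exact ⟨I, B, i, p, hB.exists_seq, h⟩

theorem GorensteinWeakInjective.extVanish_one {W L : ModuleCat.{u} R}
    (hL : GorensteinWeakInjective R L) (hW : WeakInjective R W) : ExtVanish R 1 W L := by
  obtain ⟨-, I, B, i, p, -, hI, hs, hl⟩ := hL.exists_seq
  exact extVanish_one_of_exists_lift hI hs (hl W hW)

theorem Module.Injective.prod {I J : Type u} [AddCommGroup I] [AddCommGroup J] [Module R I]
    [Module R J] (hI : Module.Injective R I) (hJ : Module.Injective R J) :
    Module.Injective R (I × J) where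
  out X Y _ _ _ _ f hf g := by
    obtain ⟨h, hh⟩ := hI.out f hf (LinearMap.fst R I J ∘ₗ g)
    obtain ⟨k, hk⟩ := hJ.out f hf (LinearMap.snd R I J ∘ₗ g)
    exact ⟨h.prod k, fun x => Prod.ext (hh x) (hk x)⟩

theorem Module.Injective.of_retract {I J : Type u} [AddCommGroup I] [AddCommGroup J] [Module R I]
    [Module R J] (hI : Module.Injective R I) (s : J →ₗ[R] I) (r : I →ₗ[R] J)
    (hrs : ∀ x, r (s x) = x) : Module.Injective R J where
  out X Y _ _ _ _ f hf g := by
    obtain ⟨h, hh⟩ := hI.out f hf (s ∘ₗ g)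
    exact ⟨r ∘ₗ h, fun x => by simp [hh, hrs]⟩

theorem exists_left_seq_of_extension {A D B : ModuleCat.{u} R} {a : A →ₗ[R] D} {b : D →ₗ[R] B}
    (hA : GorensteinWeakInjective R A) (hB : GorensteinWeakInjective R B)
    (hs : ShortExactSeq R A D B a b) :
    ∃ K E i p, (∃ A' B' a' b', GorensteinWeakInjective R A' ∧ GorensteinWeakInjective R B' ∧
      ShortExactSeq R A' K B' a' b') ∧ IsProperInjectiveSeq K E D i p := by
  obtain ⟨⟨A', I, i, p, hA', hI, ⟨hi, hp, hip⟩, hlI⟩, -⟩ := hA.exists_seq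
  obtain ⟨⟨B', J, j, q, hB', hJ, ⟨hj, hq, hjq⟩, hlJ⟩, -⟩ := hB.exists_seq
  obtain ⟨σ, hσ⟩ := (hA.extVanish_one hJ.weakInjective).exists_lift hs q
  obtain ⟨ha, hb, hab⟩ := hs
  let π : I × J →ₗ[R] D := (a ∘ₗ p).coprod σ
  have hπ : ∀ x y, π (x, y) = a (p x) + σ y := fun x y => LinearMap.coprod_apply _ _ _
  have hbπ : ∀ z, b (π z) = q z.2 := fun z => by
    rw [← Prod.mk.eta (p := z), hπ]
    simp [hσ, hab.apply_apply_eq_zero]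
  obtain ⟨c, hc⟩ := LinearMap.exists_factor_of_injective π.ker.subtype
    (Submodule.injective_subtype _) (LinearMap.inl R I J ∘ₗ i) fun x =>
      ⟨⟨(i x, 0), by simp [hπ, hip.apply_apply_eq_zero]⟩, rfl⟩
  obtain ⟨e, he⟩ := LinearMap.exists_factor_of_injective j hj
    (LinearMap.snd R I J ∘ₗ π.ker.subtype) fun x => (hjq _).1 (by
      change q x.1.2 = 0
      rw [← hbπ, show π x.1 = 0 from x.2, map_zero])
  refine ⟨ModuleCat.of R π.ker, ModuleCat.of R (I × J), π.ker.subtype, π,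
    ⟨A', B', c, e, hA', hB', fun x y hxy => hi ?_, fun m => ?_, fun x => ?_⟩, hI.prod hJ,
    ⟨Submodule.injective_subtype _, fun x => ?_, LinearMap.exact_subtype_ker_map π⟩,
    fun W hW h => ?_⟩
  · exact congr(($(hc x)).1).symm.trans (congr(($hxy).1.1).trans congr(($(hc y)).1))
  · obtain ⟨n, hn⟩ := (hab _).1 ((hσ (j m)).trans (hjq.apply_apply_eq_zero m))
    obtain ⟨x, rfl⟩ := hp n
    exact ⟨⟨(-x, j m), by simp [hπ, hn]⟩, hj (he _)⟩
  · rw [← map_eq_zero_iff j hj, he]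
    obtain ⟨⟨x, y⟩, hx⟩ := x
    have hx' := hπ x y ▸ (show π (x, y) = 0 from hx)
    constructor
    · rintro (rfl : y = 0)
      obtain ⟨z, rfl⟩ := (hip x).1 (ha (by simpa using hx'))
      exact ⟨z, Subtype.ext (hc z)⟩
    · rintro ⟨z, hz⟩
      exact (congr(($hz).1.2)).symm.trans (congr(($(hc z)).2))
  · obtain ⟨y, hy⟩ := hq (b x)
    obtain ⟨n, hn⟩ := (hab (x - σ y)).1 (by simp [hσ, hy])
    obtain ⟨z, rfl⟩ := hp n
    exact ⟨(z, y), by simp [hπ, hn]⟩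
  · obtain ⟨k, hk⟩ := hlJ W hW (b ∘ₗ h)
    obtain ⟨l, hl⟩ := LinearMap.exists_factor_of_injective a ha (h - σ ∘ₗ k) fun w =>
      (hab _).1 (by simp [hσ, hk])
    obtain ⟨m, hm⟩ := hlI W hW l
    exact ⟨m.prod k, fun w => (hπ _ _).trans (by simp [hm, hl])⟩

theorem exists_right_seq_of_extension {A D B : ModuleCat.{u} R} {a : A →ₗ[R] D} {b : D →ₗ[R] B}
    (hA : GorensteinWeakInjective R A) (hB : GorensteinWeakInjective R B)
    (hs : ShortExactSeq R A D B a b) :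
    ∃ E C i p, (∃ A' B' a' b', GorensteinWeakInjective R A' ∧ GorensteinWeakInjective R B' ∧
      ShortExactSeq R A' C B' a' b') ∧ IsProperInjectiveSeq D E C i p := by
  obtain ⟨-, I, A', i, p, hA', hI, ⟨hi, hp, hip⟩, hlI⟩ := hA.exists_seq
  obtain ⟨-, J, B', j, q, hB', hJ, ⟨hj, hq, hjq⟩, hlJ⟩ := hB.exists_seq
  obtain ⟨ha, hb, hab⟩ := hs
  obtain ⟨φ, hφ⟩ := hI.out a ha i
  let ι : D →ₗ[R] I × J := φ.prod (j ∘ₗ b)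
  have hι : Function.Injective ι := (injective_iff_map_eq_zero _).2 fun x hx => by
    obtain ⟨y, rfl⟩ := (hab x).1 (hj ((congr(($hx).2)).trans (map_zero j).symm))
    have hy : i y = 0 := (hφ y).symm.trans congr(($hx).1)
    rw [(map_eq_zero_iff i hi).1 hy, map_zero]
  let π := ι.range.mkQ
  have hπ : Function.Surjective π := Submodule.mkQ_surjective _
  have hιπ : Function.Exact ι π := LinearMap.exact_map_mkQ_range ι
  obtain ⟨c, hc⟩ := LinearMap.exists_factor_of_surjective p hp (π ∘ₗ LinearMap.inl R I J)
    fun x hx => by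
      obtain ⟨y, rfl⟩ := (hip x).1 hx
      exact (hιπ _).2 ⟨a y, Prod.ext (hφ y) (by
        change j (b (a y)) = 0
        rw [hab.apply_apply_eq_zero, map_zero])⟩
  obtain ⟨e, he⟩ := LinearMap.exists_factor_of_surjective π hπ (q ∘ₗ LinearMap.snd R I J)
    fun x hx => by
      obtain ⟨y, rfl⟩ := (hιπ x).1 hx
      exact hjq.apply_apply_eq_zero (b y)
  have hc' : ∀ x, c (p x) = π (x, 0) := hc
  have he' : ∀ x y, e (π (x, y)) = q y := fun x y => he (x, y)
  have hce : Function.Exact c e := fun z => by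
    obtain ⟨⟨x, y⟩, rfl⟩ := hπ z
    rw [he']
    constructor
    · intro hy
      obtain ⟨m, rfl⟩ := (hjq y).1 hy
      obtain ⟨d, rfl⟩ := hb m
      refine ⟨p (x - φ d), ?_⟩
      rw [hc', ← sub_eq_zero, ← map_sub]
      exact (hιπ _).2 ⟨-d, by simp [ι]⟩
    · rintro ⟨n, hn⟩
      obtain ⟨x', rfl⟩ := hp n
      rw [← he' x y, ← hn, hc', he', map_zero]
  have hc_inj : Function.Injective c := (injective_iff_map_eq_zero _).2 fun z hz => by
    obtain ⟨x, rfl⟩ := hp z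
    obtain ⟨d, hd⟩ := (hιπ _).1 ((hc' x).symm.trans hz)
    obtain ⟨y, rfl⟩ := (hab d).1 (hj ((congr(($hd).2)).trans (map_zero j).symm))
    have hy : i y = x := (hφ y).symm.trans congr(($hd).1)
    rw [← hy, hip.apply_apply_eq_zero]
  refine ⟨ModuleCat.of R (I × J), ModuleCat.of R ((I × J) ⧸ ι.range), ι, π,
    ⟨A', B', c, e, hA', hB', hc_inj, fun m => ?_, hce⟩, hI.prod hJ, ⟨hι, hπ, hιπ⟩,
    fun W hW h => ?_⟩
  · obtain ⟨y, rfl⟩ := hq m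
    exact ⟨π (0, y), he' 0 y⟩
  · obtain ⟨k, hk⟩ := hlJ W hW (e ∘ₗ h)
    obtain ⟨l, hl⟩ := LinearMap.exists_factor_of_injective c hc_inj
      (h - π ∘ₗ LinearMap.inr R I J ∘ₗ k) fun w => (hce _).1 (by
        change e (h w - π (0, k w)) = 0
        rw [map_sub, he', hk, LinearMap.comp_apply, sub_self])
    obtain ⟨m, hm⟩ := hlI W hW l
    refine ⟨m.prod k, fun w => ?_⟩
    have hw : π (m w, 0) = h w - π (0, k w) := by
      rw [← hc', hm]
      exact hl w
    rw [sub_eq_iff_eq_add.1 hw.symm, ← map_add, Prod.mk_add_mk, add_zero, zero_add]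
    rfl

theorem GorensteinWeakInjective.of_extension {A D B : ModuleCat.{u} R} {a : A →ₗ[R] D}
    {b : D →ₗ[R] B} (hA : GorensteinWeakInjective R A) (hB : GorensteinWeakInjective R B)
    (hs : ShortExactSeq R A D B a b) : GorensteinWeakInjective R D :=
  GorensteinWeakInjective.of_forall_exists
    (fun D => ∃ A B a b, GorensteinWeakInjective R A ∧ GorensteinWeakInjective R B ∧
      ShortExactSeq R A D B a b)
    (fun _ ⟨_, _, _, _, hA, hB, hs⟩ => exists_left_seq_of_extension hA hB hs)
    (fun _ ⟨_, _, _, _, hA, hB, hs⟩ => exists_right_seq_of_extension hA hB hs)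
    ⟨A, B, a, b, hA, hB, hs⟩

theorem GorensteinWeakInjective.of_split_injective {L D E : ModuleCat.{u} R}
    (hD : GorensteinWeakInjective R D) (hE : Module.Injective R E) {l : L →ₗ[R] D}
    {ρ : D →ₗ[R] E} (hs : ShortExactSeq R L D E l ρ) {s : E →ₗ[R] D} (hρs : ∀ x, ρ (s x) = x) :
    GorensteinWeakInjective R L := by
  obtain ⟨⟨K, I, κ, p, hK, hI, ⟨hκ, hp, hκp⟩, hlI⟩, J, C, ι, q, hC, hJ, ⟨hι, hq, hιq⟩, hlJ⟩ :=
    hD.exists_seq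
  obtain ⟨hl, -, hlρ⟩ := hs
  have hleft : ∃ I' i' p', IsProperInjectiveSeq K I' L i' p' := by
    obtain ⟨t, ht⟩ := hlI E hE.weakInjective s
    let I' := (ρ ∘ₗ p).ker
    obtain ⟨r, hr⟩ := LinearMap.exists_factor_of_injective I'.subtype
      (Submodule.injective_subtype _) (LinearMap.id - t ∘ₗ ρ ∘ₗ p) fun x =>
        ⟨⟨x - t (ρ (p x)), by simp [I', ht, hρs]⟩, rfl⟩
    obtain ⟨i', hi'⟩ := LinearMap.exists_factor_of_injective I'.subtype
      (Submodule.injective_subtype _) κ fun x =>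
        ⟨⟨κ x, by simp [I', hκp.apply_apply_eq_zero]⟩, rfl⟩
    obtain ⟨p', hp'⟩ := LinearMap.exists_factor_of_injective l hl (p ∘ₗ I'.subtype) fun x =>
      (hlρ _).1 x.2
    refine ⟨ModuleCat.of R I', i', p',
      hI.of_retract I'.subtype r fun x => Subtype.ext ((hr x).trans ?_),
      ⟨fun x y hxy => hκ ?_, fun y => ?_, fun x => ?_⟩, fun W hW h => ?_⟩
    · simp [show ρ (p x) = 0 from x.2]
    · rw [← hi', ← hi', hxy]
    · obtain ⟨x, hx⟩ := hp (l y)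
      exact ⟨⟨x, by simp [I', hx, hlρ.apply_apply_eq_zero]⟩, hl ((hp' _).trans hx)⟩
    · rw [← map_eq_zero_iff l hl, hp']
      refine (hκp x.1).trans ⟨fun ⟨y, hy⟩ => ⟨y, Subtype.ext ((hi' y).trans hy)⟩, ?_⟩
      rintro ⟨y, rfl⟩
      exact ⟨y, (hi' y).symm⟩
    · obtain ⟨k, hk⟩ := hlI W hW (l ∘ₗ h)
      exact ⟨k.codRestrict I' fun w => by simp [I', hk, hlρ.apply_apply_eq_zero],
        fun w => hl ((hp' _).trans (hk w))⟩
  have hright : ∃ J' j' q', IsProperInjectiveSeq L J' C j' q' := by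
    obtain ⟨r, hr⟩ := hE.out ι hι ρ
    let J' := r.ker
    obtain ⟨u, hu⟩ := LinearMap.exists_factor_of_injective J'.subtype
      (Submodule.injective_subtype _) (LinearMap.id - ι ∘ₗ s ∘ₗ r) fun x =>
        ⟨⟨x - ι (s (r x)), by simp [J', hr, hρs]⟩, rfl⟩
    have hu' : ∀ x, (u x : J) = x - ι (s (r x)) := hu
    refine ⟨ModuleCat.of R J',
      (ι ∘ₗ l).codRestrict J' fun x => by simp [J', hr, hlρ.apply_apply_eq_zero],
      q ∘ₗ J'.subtype,
      hJ.of_retract J'.subtype u fun x => Subtype.ext ((hu x).trans ?_),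
      ⟨fun x y hxy => hl (hι congr(($hxy).1)), fun y => ?_, fun x => ?_⟩, fun W hW h => ?_⟩
    · simp [show r x = 0 from x.2]
    · obtain ⟨x, rfl⟩ := hq y
      exact ⟨u x, by simp [hu', hιq.apply_apply_eq_zero]⟩
    · constructor
      · intro hx
        obtain ⟨d, hd⟩ := (hιq x.1).1 hx
        obtain ⟨y, rfl⟩ := (hlρ d).1 (by rw [← hr, hd]; exact x.2)
        exact ⟨y, Subtype.ext hd⟩
      · rintro ⟨y, rfl⟩
        exact hιq.apply_apply_eq_zero _
    · obtain ⟨k, hk⟩ := hlJ W hW h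
      exact ⟨u ∘ₗ k, fun w => by simp [hu', hιq.apply_apply_eq_zero, hk]⟩
  obtain ⟨I', i', p', h⟩ := hleft
  obtain ⟨J', j', q', h'⟩ := hright
  exact hK.of_seq h hC h'

theorem GorensteinWeakInjective.of_shortExactSeq {L M N : ModuleCat.{u} R} {f : L →ₗ[R] M}
    {g : M →ₗ[R] N} (hs : ShortExactSeq R L M N f g) (hM : GorensteinWeakInjective R M)
    (hN : GorensteinWeakInjective R N)
    (hL : ∀ I : ModuleCat.{u} R, Module.Injective R I → ExtVanish R 1 I L) :
    GorensteinWeakInjective R L := by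
  obtain ⟨⟨K, E, i, p, hK, hE, ⟨hi, hp, hip⟩, -⟩, -⟩ := hN.exists_seq
  obtain ⟨hf, hg, hfg⟩ := hs
  let D : Submodule R (M × E) := (g.coprod (-p)).ker
  have hD : ∀ z, z ∈ D ↔ g z.1 = p z.2 := fun z => by
    simp [D, LinearMap.coprod_apply, ← sub_eq_add_neg, sub_eq_zero]
  have hKD : ShortExactSeq R K (ModuleCat.of R D) M
      ((LinearMap.inr R M E ∘ₗ i).codRestrict D fun x => by
        simp [hD, hip.apply_apply_eq_zero])
      (LinearMap.fst R M E ∘ₗ D.subtype) := by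
    refine ⟨fun x y hxy => hi congr(($hxy).1.2), fun m => ?_, fun x => ?_⟩
    · obtain ⟨e, he⟩ := hp (g m)
      exact ⟨⟨(m, e), (hD _).2 he.symm⟩, rfl⟩
    · obtain ⟨⟨m, e⟩, hx⟩ := x
      constructor
      · rintro (rfl : m = 0)
        obtain ⟨y, rfl⟩ := (hip e).1 (((hD _).1 hx).symm.trans (map_zero g))
        exact ⟨y, rfl⟩
      · rintro ⟨y, hy⟩
        exact congr(($hy).1.1).symm
  have hLD : ShortExactSeq R L (ModuleCat.of R D) E
      ((LinearMap.inl R M E ∘ₗ f).codRestrict D fun x => by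
        simp [hD, hfg.apply_apply_eq_zero])
      (LinearMap.snd R M E ∘ₗ D.subtype) := by
    refine ⟨fun x y hxy => hf congr(($hxy).1.1), fun e => ?_, fun x => ?_⟩
    · obtain ⟨m, hm⟩ := hg (p e)
      exact ⟨⟨(m, e), (hD _).2 hm⟩, rfl⟩
    · obtain ⟨⟨m, e⟩, hx⟩ := x
      constructor
      · rintro (rfl : e = 0)
        obtain ⟨y, rfl⟩ := (hfg m).1 (((hD _).1 hx).trans (map_zero p))
        exact ⟨y, rfl⟩
      · rintro ⟨y, hy⟩
        exact congr(($hy).1.2).symm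
  obtain ⟨s, hs⟩ := (hL E hE).exists_lift hLD LinearMap.id
  exact (hK.of_extension hM hKD).of_split_injective hE hLD hs

end

/-- Let `0 → L → M → N → 0` be exact with `M`, `N` Gorenstein weak injective. Then `L` is
Gorenstein weak injective iff `Ext^1_R(I, L) = 0` for every injective `I`, iff
`Ext^1_R(W, L) = 0` for every weak injective `W`. -/
theorem gorensteinWeakInjective_kernel_iff (L M N : ModuleCat.{u} R)
    (f : L →ₗ[R] M) (g : M →ₗ[R] N) (hse : ShortExactSeq R L M N f g)
    (hM : GorensteinWeakInjective R M) (hN : GorensteinWeakInjective R N) :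
    (GorensteinWeakInjective R L ↔
      ∀ I : ModuleCat.{u} R, Module.Injective R I → ExtVanish R 1 I L) ∧
    (GorensteinWeakInjective R L ↔
      ∀ W : ModuleCat.{u} R, WeakInjective R W → ExtVanish R 1 W L) := by
  have h : (∀ I : ModuleCat.{u} R, Module.Injective R I → ExtVanish R 1 I L) →
      GorensteinWeakInjective R L := .of_shortExactSeq hse hM hN
  exact ⟨⟨fun hL I hI => hL.extVanish_one hI.weakInjective, h⟩,
    ⟨fun hL W hW => hL.extVanish_one hW, fun hL => h fun I hI => hL I hI.weakInjective⟩⟩
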